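/- arXiv:2005.13777 — 2 statements merged into one kernel-verified Lean document; each statement's English description precedes it below -/
import Mathlib

section
/- There exist e₀, e ∈ ℕ such that e ⊆_{=^{ce}} e₀, but for every i ∈ ℕ and every d ∈ ℕ with ran φ_d = ran φ_{e₀} ∩ W_i, it is not the case that e (=^{ce})⁺ d. In other words, the set of (=^{ce})⁺-classes of codes e with e ⊆_{=^{ce}} e₀ is not equal to the set of (=^{ce})⁺-classes of codes enumerating the sets ran φ_{e₀} ∩ W_i for i ∈ ℕ. -/
/-- The `e`-th partial computable function. -/
def phi (e : ℕ) : ℕ →. ℕ :=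
  Nat.Partrec.Code.eval (Denumerable.ofNat Nat.Partrec.Code e)

/-- `W_e`, the `e`-th c.e. set: the domain of `φ_e`. -/
def WSet (e : ℕ) : Set ℕ := (phi e).Dom

/-- The `E`-equivalence class of `k`. -/
def classOf (E : ℕ → ℕ → Prop) (k : ℕ) : Set ℕ := {x | E k x}

/-- Computable reducibility of binary relations on ℕ. -/
def Reduces (E F : ℕ → ℕ → Prop) : Prop :=
  ∃ f : ℕ → ℕ, Computable f ∧ ∀ m n, E m n ↔ F (f m) (f n)

/-- The computable FS-jump of `E`: `e E⁺ e'` iff the set of `E`-classes of elements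
of `ran φ_e` equals the set of `E`-classes of elements of `ran φ_{e'}`. -/
def FSJump (E : ℕ → ℕ → Prop) : ℕ → ℕ → Prop :=
  fun e e' => classOf E '' (phi e).ran = classOf E '' (phi e').ran

/-- Equality of c.e. sets: `e =^{ce} e'` iff `W_e = W_{e'}`. -/
def eqCE : ℕ → ℕ → Prop := fun e e' => WSet e = WSet e'

/-- `e ⊆_E e'`: every element of `ran φ_e` is `E`-equivalent to some element
of `ran φ_{e'}`. -/
def subE (E : ℕ → ℕ → Prop) (e e' : ℕ) : Prop :=
  ∀ k ∈ (phi e).ran, ∃ m ∈ (phi e').ran, E k m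

/-!
Let `P` be a c.e. predicate whose complement is not c.e., such as the halting problem. Identifying
`a` with its Gödel number, the code `t a` enumerates the singleton `{a}`, while `r a` enumerates
`{a}` if `P a` fails and all of `ℕ` if it holds. Let `e` enumerate all the `t a`, and let `e₀`
enumerate all the `r a`, together with `t a` once `P a` has been verified. Every singleton then has
a code in `ran φ_{e₀}`, but if `P a` fails the only one for `{a}` is `r a`. So a set `W_i` cutting
out of `ran φ_{e₀}` codes for exactly the singletons contains `r a` if and only if `P a` fails,
which would make the complement of `P` c.e.
-/

open Nat.Partrec (Code)
open Encodable

section REPred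

variable {α β : Type*} [Primcodable α] [Primcodable β]

theorem rePred_or {p q : α → Prop} (hp : REPred p) (hq : REPred q) :
    REPred fun a => p a ∨ q a := by
  obtain ⟨k, hk, hk_spec⟩ := Partrec.merge' hp hq
  refine hk.dom_re.of_eq fun a => (hk_spec a).2.trans ?_
  simp [Part.assert]

theorem rePred_comp {p : β → Prop} (hp : REPred p) {f : α → β} (hf : Computable f) :
    REPred fun a => p (f a) :=
  Partrec.comp hp hf

theorem rePred_eq {f g : α → β} (hf : Computable f) (hg : Computable g) :
    REPred fun a => f a = g a :=
  rePred_comp Primrec.eq.computablePred.to_re (hf.pair hg)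

end REPred

section Codes

variable {α : Type*} [Primcodable α]

theorem exists_phi_eq {f : ℕ →. ℕ} (hf : Nat.Partrec f) : ∃ e, phi e = f := by
  obtain ⟨c, rfl⟩ := Code.exists_code.1 hf
  exact ⟨encode c, by rw [phi, Denumerable.ofNat_encode]⟩

theorem partrec_phi (e : ℕ) : Partrec (phi e) :=
  Code.eval_part.comp (Computable.const _) Computable.id

theorem rePred_mem_WSet (i : ℕ) : REPred (· ∈ WSet i) :=
  (partrec_phi i).dom_re

theorem exists_computable_WSet_eq (R : α → ℕ → Prop)
    (hR : REPred fun x : α × ℕ => R x.1 x.2) :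
    ∃ f : α → ℕ, Computable f ∧ ∀ a, WSet (f a) = {n | R a n} := by
  obtain ⟨c, hc⟩ := Code.exists_code.1 hR
  refine ⟨fun a => encode (Code.curry c (encode a)), ?_, fun a => ?_⟩
  · exact Computable.encode.comp
      (Code.primrec₂_curry.to_comp.comp (Computable.const c) Computable.encode)
  · ext n
    simp [WSet, phi, Code.eval_curry, hc, PFun.mem_dom]

theorem exists_ran_phi_eq {f : α →. ℕ} (hf : Partrec f) : ∃ e, (phi e).ran = f.ran := by
  obtain ⟨e, he⟩ := exists_phi_eq hf
  refine ⟨e, Set.ext fun k => ?_⟩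
  simp only [he, PFun.ran, Set.mem_ofPred_eq]
  constructor
  · rintro ⟨n, hn⟩
    obtain ⟨a, -, ha⟩ := Part.mem_bind_iff.1 hn
    exact ⟨a, by simpa using ha⟩
  · rintro ⟨a, ha⟩
    exact ⟨encode a, by simpa using ha⟩

theorem exists_ran_phi_eq_range {f : α → ℕ} (hf : Computable f) :
    ∃ e, (phi e).ran = Set.range f := by
  obtain ⟨e, he⟩ := exists_ran_phi_eq hf.partrec
  refine ⟨e, he.trans (Set.ext fun k => ?_)⟩
  simp [PFun.ran, eq_comm]

theorem exists_ran_phi_eq_image {P : α → Prop} (hP : REPred P) {f : α → ℕ} (hf : Computable f) :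
    ∃ e, (phi e).ran = f '' {a | P a} := by
  obtain ⟨e, he⟩ := exists_ran_phi_eq (Partrec.map hP (hf.comp Computable.fst).to₂)
  refine ⟨e, he.trans (Set.ext fun k => ?_)⟩
  simp [PFun.ran, eq_comm]

theorem exists_ran_phi_eq_union (d e : ℕ) : ∃ u, (phi u).ran = (phi d).ran ∪ (phi e).ran := by
  obtain ⟨u, hu⟩ := exists_ran_phi_eq <| Partrec.sumCasesOn (α := ℕ ⊕ ℕ) Computable.id
    ((partrec_phi d).comp Computable.snd).to₂ ((partrec_phi e).comp Computable.snd).to₂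
  refine ⟨u, hu.trans (Set.ext fun k => ?_)⟩
  simp [PFun.ran]

end Codes

section FSJump

variable {α : Type*} {E : ℕ → ℕ → Prop}

theorem classOf_eq_classOf_iff (hE : Equivalence E) {k m : ℕ} :
    classOf E k = classOf E m ↔ E k m := by
  constructor
  · intro h
    have hm : m ∈ classOf E m := hE.refl m
    rwa [← h] at hm
  · exact fun h => Set.ext fun x => ⟨hE.trans (hE.symm h), hE.trans h⟩

theorem subE_iff_image_classOf_subset (hE : Equivalence E) {e e' : ℕ} :
    subE E e e' ↔ classOf E '' (phi e).ran ⊆ classOf E '' (phi e').ran := by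
  rw [Set.image_subset_iff]
  simp only [subE, Set.subset_def, Set.mem_preimage, Set.mem_image, classOf_eq_classOf_iff hE]
  exact forall₂_congr fun _ _ => exists_congr fun _ => and_congr_right fun _ => ⟨hE.symm, hE.symm⟩

theorem fsJump_iff_subE_and_subE (hE : Equivalence E) {e e' : ℕ} :
    FSJump E e e' ↔ subE E e e' ∧ subE E e' e := by
  rw [subE_iff_image_classOf_subset hE, subE_iff_image_classOf_subset hE]
  exact Set.Subset.antisymm_iff

variable {P : α → Prop} {r t : α → ℕ}

theorem mem_iff_not_of_fsJump (hE : Equivalence E)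
    (hrt : ∀ a b, E (r a) (t b) ↔ a = b ∧ ¬ P a) (htt : ∀ a b, E (t a) (t b) → a = b)
    {d e : ℕ} {S : Set ℕ} (he : (phi e).ran = Set.range t)
    (hd : (phi d).ran = (Set.range r ∪ t '' {a | P a}) ∩ S) (hJump : FSJump E e d) (a : α) :
    r a ∈ S ↔ ¬ P a := by
  obtain ⟨hed, hde⟩ := (fsJump_iff_subE_and_subE hE).1 hJump
  simp only [subE, he, hd] at hed hde
  constructor
  · intro haS
    obtain ⟨_, ⟨b, rfl⟩, hab⟩ := hde (r a) ⟨.inl ⟨a, rfl⟩, haS⟩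
    exact ((hrt a b).1 hab).2
  · intro ha
    obtain ⟨_, ⟨⟨b, rfl⟩ | ⟨b, hb, rfl⟩, hbS⟩, hab⟩ := hed (t a) ⟨a, rfl⟩
    · obtain ⟨rfl, -⟩ := (hrt b a).1 (hE.symm hab)
      exact hbS
    · obtain rfl := htt a b hab
      exact absurd hb ha

theorem exists_subE_not_realized_by_intersections [Primcodable α] (hE : Equivalence E)
    (hP : REPred P) (hP_compl : ¬ REPred fun a => ¬ P a) (hr : Computable r) (ht : Computable t)
    (hrt : ∀ a b, E (r a) (t b) ↔ a = b ∧ ¬ P a) (htt : ∀ a b, E (t a) (t b) → a = b) :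
    ∃ e₀ e : ℕ, subE E e e₀ ∧
      ∀ i d : ℕ, (phi d).ran = (phi e₀).ran ∩ WSet i → ¬ FSJump E e d := by
  obtain ⟨e, he⟩ := exists_ran_phi_eq_range ht
  obtain ⟨u, hu⟩ := exists_ran_phi_eq_range hr
  obtain ⟨v, hv⟩ := exists_ran_phi_eq_image hP ht
  obtain ⟨e₀, he₀⟩ := exists_ran_phi_eq_union u v
  rw [hu, hv] at he₀
  refine ⟨e₀, e, ?_, fun i d hd hJump => hP_compl ?_⟩
  · simp only [subE, he, he₀]
    rintro _ ⟨a, rfl⟩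
    by_cases ha : P a
    · exact ⟨t a, .inr ⟨a, ha, rfl⟩, hE.refl _⟩
    · exact ⟨r a, .inl ⟨a, rfl⟩, hE.symm ((hrt a a).2 ⟨rfl, ha⟩)⟩
  · rw [he₀] at hd
    exact (rePred_comp (rePred_mem_WSet i) hr).of_eq (mem_iff_not_of_fsJump hE hrt htt he hd hJump)

end FSJump

theorem equivalence_eqCE : Equivalence eqCE :=
  ⟨fun _ => rfl, Eq.symm, Eq.trans⟩

theorem ofPred_eq_or_eq_singleton_iff {α : Type*} [Nontrivial α] {a b : α} {p : Prop} :
    {x | x = a ∨ p} = {b} ↔ a = b ∧ ¬ p := by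
  by_cases hp : p
  · simpa [hp] using (Set.singleton_ne_univ b).symm
  · simp [hp]

/-- There are `e₀, e` with `e ⊆_{=^{ce}} e₀` such that no code enumerating a set of
the form `ran φ_{e₀} ∩ W_i` is `(=^{ce})⁺`-equivalent to `e`. -/
theorem subE_not_realized_by_intersections :
    ∃ e₀ e : ℕ, subE eqCE e e₀ ∧
      ∀ i d : ℕ, (phi d).ran = (phi e₀).ran ∩ WSet i → ¬ FSJump eqCE e d := by
  have hHalt := ComputablePred.halting_problem_re 0
  have hSingleton : REPred fun x : Code × ℕ => x.2 = encode x.1 :=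
    rePred_eq Computable.snd (Computable.encode.comp Computable.fst)
  obtain ⟨t, ht, hWt⟩ := exists_computable_WSet_eq (fun c n => n = encode c) hSingleton
  obtain ⟨r, hr, hWr⟩ := exists_computable_WSet_eq (fun c n => n = encode c ∨ (c.eval 0).Dom)
    (rePred_or hSingleton (rePred_comp hHalt Computable.fst))
  simp only [Set.ofPred_eq_eq_singleton] at hWt
  refine exists_subE_not_realized_by_intersections equivalence_eqCE hHalt
    (ComputablePred.halting_problem_not_re 0) hr ht (fun a b => ?_) fun a b hab => ?_
  · rw [eqCE, hWr, hWt, ofPred_eq_or_eq_singleton_iff, encode_inj]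
  · rwa [eqCE, hWt, hWt, Set.singleton_eq_singleton_iff, encode_inj] at hab
end

section
/- For any equivalence relation E on ℕ with infinitely many equivalence classes, the identity relation on ℕ is computably reducible to E⁺⁺. -/
/-!
Call the set of `E`-classes met by `ran φ_e` the set named by `e`, so that `E⁺` compares named sets.
There is a computable `f` such that `φ_{f n}` enumerates indices for all the sets listed by at most
`n` numbers; the sets they name are exactly the sets of at most `n` classes. As there are
infinitely many classes, `n` is recovered as the largest size occurring, so distinct `n` give
`E⁺⁺`-inequivalent indices.
-/

section Index

variable {α β : Type*} [Primcodable α] [Primcodable β]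

theorem exists_computable_phi_eq {h : α → ℕ →. ℕ} (hh : Partrec₂ h) :
    ∃ g : α → ℕ, Computable g ∧ ∀ a, phi (g a) = h a := by
  obtain ⟨c, hc⟩ := Nat.Partrec.Code.exists_code.1 hh
  refine ⟨fun a => Encodable.encode (c.curry (Encodable.encode a)), ?_, fun a => ?_⟩
  · exact (Primrec.encode.comp
      (Nat.Partrec.Code.primrec₂_curry.comp (Primrec.const c) Primrec.encode)).to_comp
  · funext i
    simp [phi, Nat.Partrec.Code.eval_curry, hc, Part.map_id']

theorem exists_computable_ran_phi_eq_of_option {o : α → ℕ → Option ℕ} (ho : Computable₂ o) :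
    ∃ g : α → ℕ, Computable g ∧ ∀ a, (phi (g a)).ran = {x | ∃ i, o a i = some x} := by
  obtain ⟨g, hg, phi_g⟩ := exists_computable_phi_eq (h := fun a i => (o a i : Part ℕ)) ho.ofOption
  refine ⟨g, hg, fun a => ?_⟩
  ext x
  simp [PFun.ran, phi_g]

theorem exists_computable_ran_phi_eq_range {u : α → β → ℕ} (hu : Computable₂ u) :
    ∃ g : α → ℕ, Computable g ∧ ∀ a, (phi (g a)).ran = Set.range (u a) := by
  have enumerate : Computable₂ fun (a : α) (i : ℕ) => (Encodable.decode (α := β) i).map (u a) :=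
    Computable.option_map (Computable.decode.comp Computable.snd)
      (hu.comp (Computable.fst.comp Computable.fst) Computable.snd)
  obtain ⟨g, hg, ran_g⟩ := exists_computable_ran_phi_eq_of_option enumerate
  refine ⟨g, hg, fun a => ?_⟩
  ext x
  simp only [ran_g, Set.mem_ofPred_eq, Option.map_eq_some_iff, Set.mem_range]
  exact ⟨fun ⟨_, b, _, hb⟩ => ⟨b, hb⟩, fun ⟨b, hb⟩ => ⟨_, b, Encodable.encodek b, hb⟩⟩

theorem exists_computable_ran_phi_eq_mem_list :
    ∃ g : List ℕ → ℕ, Computable g ∧ ∀ l, (phi (g l)).ran = {x | x ∈ l} := by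
  obtain ⟨g, hg, ran_g⟩ :=
    exists_computable_ran_phi_eq_of_option (Computable.list_getElem? (α := ℕ))
  refine ⟨g, hg, fun l => ?_⟩
  simp only [ran_g, List.mem_iff_getElem?]

end Index

section SubsetsOfEncardLE

variable {α β : Type*}

/-- The subsets of `A` with at most `n` elements. The bound is on `Set.encard`, so infinite subsets
are excluded. -/
def subsetsOfEncardLE (A : Set α) (n : ℕ) : Set (Set α) :=
  {S | S ⊆ A ∧ S.encard ≤ n}

theorem subsetsOfEncardLE_injective {A : Set α} (hA : A.Infinite) :
    Function.Injective (subsetsOfEncardLE A) := by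
  have le_of_subset {m n : ℕ} (h : subsetsOfEncardLE A m ⊆ subsetsOfEncardLE A n) : m ≤ n := by
    obtain ⟨S, hSA, hS⟩ := Set.exists_subset_encard_eq (s := A) (k := m) (by simp [hA.encard_eq])
    have hSn : S.encard ≤ n := (h ⟨hSA, hS.le⟩).2
    exact_mod_cast hS ▸ hSn
  exact fun m n h => (le_of_subset h.subset).antisymm (le_of_subset h.superset)

theorem encard_mem_list_le_length (l : List α) : {x | x ∈ l}.encard ≤ l.length := by
  classical
  rw [← List.coe_toFinset, Set.encard_coe_eq_coe_finsetCard]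
  exact_mod_cast l.toFinset_card_le

theorem range_image_mem_take (c : α → β) (n : ℕ) :
    (Set.range fun l : List α => c '' {x | x ∈ l.take n}) =
      subsetsOfEncardLE (Set.range c) n := by
  ext S
  constructor
  · rintro ⟨l, rfl⟩
    refine ⟨Set.image_subset_range _ _, ?_⟩
    calc (c '' {x | x ∈ l.take n}).encard
        ≤ {x | x ∈ l.take n}.encard := Set.encard_image_le _ _
      _ ≤ (l.take n).length := encard_mem_list_le_length _
      _ ≤ n := by exact_mod_cast l.length_take_le n
  · rintro ⟨hSc, hSn⟩
    lift S to Finset β using Set.finite_of_encard_le_coe hSn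
    obtain ⟨l, hl⟩ : S.toList ∈ Set.range (List.map c) := by
      rw [Set.range_list_map]
      exact fun y hy => hSc (Finset.mem_toList.1 hy)
    have length_le : l.length ≤ n := by
      rw [← List.length_map (f := c), hl, Finset.length_toList]
      simpa using hSn
    refine ⟨l, ?_⟩
    ext y
    simp [List.take_of_length_le length_le, ← List.mem_map, hl]

end SubsetsOfEncardLE

/-- The set of `E`-classes named by the index `e`: those with a representative in `ran φ_e`. The
jump `FSJump E` is equality of named sets. -/
def namedClasses (E : ℕ → ℕ → Prop) (e : ℕ) : Set (Set ℕ) :=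
  classOf E '' (phi e).ran

theorem fsJump_fsJump_iff {E : ℕ → ℕ → Prop} {a b : ℕ} :
    FSJump (FSJump E) a b ↔
      namedClasses E '' (phi a).ran = namedClasses E '' (phi b).ran := by
  let indices (S : Set (Set ℕ)) : Set ℕ := {e | S = namedClasses E e}
  have indices_injOn : Set.InjOn indices (Set.range (namedClasses E)) := by
    rintro _ ⟨e, rfl⟩ T - h
    have mem_indices : e ∈ indices (namedClasses E e) := rfl
    exact (h ▸ mem_indices : e ∈ indices T).symm
  have classOf_fsJump : classOf (FSJump E) = indices ∘ namedClasses E := rfl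
  rw [FSJump, classOf_fsJump, Set.image_comp, Set.image_comp,
    indices_injOn.image_eq_image_iff (Set.image_subset_range _ _) (Set.image_subset_range _ _)]

theorem exists_computable_namedClasses_image_ran_phi :
    ∃ f : ℕ → ℕ, Computable f ∧ ∀ E n,
      namedClasses E '' (phi (f n)).ran = subsetsOfEncardLE (Set.range (classOf E)) n := by
  obtain ⟨g, hg, ran_g⟩ := exists_computable_ran_phi_eq_mem_list
  have take_computable : Computable₂ fun (n : ℕ) (l : List ℕ) => g (l.take n) :=
    hg.comp Primrec.list_take.to_comp
  obtain ⟨f, hf, ran_f⟩ := exists_computable_ran_phi_eq_range take_computable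
  refine ⟨f, hf, fun E n => ?_⟩
  calc namedClasses E '' (phi (f n)).ran
      = Set.range fun l : List ℕ => namedClasses E (g (l.take n)) := by
        rw [ran_f, ← Set.range_comp]; rfl
    _ = Set.range fun l : List ℕ => classOf E '' {x | x ∈ l.take n} := by
        simp only [namedClasses, ran_g]
    _ = subsetsOfEncardLE (Set.range (classOf E)) n := range_image_mem_take _ _

theorem id_le_double_jump_general (E : ℕ → ℕ → Prop) (hinf : (Set.range (classOf E)).Infinite) :
    Reduces (@Eq ℕ) (FSJump (FSJump E)) := by
  obtain ⟨f, hf, namedClasses_f⟩ := exists_computable_namedClasses_image_ran_phi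
  refine ⟨f, hf, fun m n => ?_⟩
  rw [fsJump_fsJump_iff, namedClasses_f, namedClasses_f,
    (subsetsOfEncardLE_injective hinf).eq_iff]

/-- For any equivalence relation `E` with infinitely many classes, `id ≤ E⁺⁺`. -/
theorem id_le_double_jump (E : ℕ → ℕ → Prop) (hE : Equivalence E)
    (hinf : (Set.range (classOf E)).Infinite) :
    Reduces (@Eq ℕ) (FSJump (FSJump E)) := id_le_double_jump_general E hinf
end
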